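/- For every n, p_n(1123, 1211) = p_n(1123, 1222); that is, the pattern pairs (1123, 1211) and (1123, 1222) are Wilf-equivalent. -/

import Mathlib

/-- A restricted growth function (canonical sequential form of a set partition):
a word over the positive integers whose first letter is 1 and where each letter
is at most one more than the maximum of the preceding letters. -/
def IsRGF (w : List ℕ) : Prop :=
  (∀ x ∈ w, 1 ≤ x) ∧
  (w ≠ [] → w.getD 0 0 = 1) ∧
  ∀ i, i + 1 < w.length → w.getD (i + 1) 0 ≤ ((w.take (i + 1)).foldr max 0) + 1

/-- Two words of the same length are order-isomorphic: corresponding entries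
compare the same way (this preserves equalities as well). -/
def WordOrdIso (s t : List ℕ) : Prop :=
  s.length = t.length ∧
  ∀ i j, i < s.length → j < s.length →
    (s.getD i 0 < s.getD j 0 ↔ t.getD i 0 < t.getD j 0)

/-- `w` contains the pattern `p`: a subsequence of `w` is order-isomorphic to `p`. -/
def PatContains (w p : List ℕ) : Prop := ∃ s : List ℕ, s.Sublist w ∧ WordOrdIso s p

/-- `w` avoids the pattern `p`. -/
def PatAvoids (w p : List ℕ) : Prop := ¬ PatContains w p

/-- `pCount n T` = number of RGFs of length `n` avoiding every pattern in `T`. -/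
noncomputable def pCount (n : ℕ) (T : Set (List ℕ)) : ℕ :=
  {w : List ℕ | IsRGF w ∧ w.length = n ∧ ∀ p ∈ T, PatAvoids w p}.ncard

open Finset in
def RR : ℕ → ℕ → ℕ → ℕ
  | x, 0, N => Nat.choose (x + N) x
  | x, s + 1, N => ∑ i ∈ Finset.range (N + 1), RR x s (i + 1)

theorem RR_succ (x s N : ℕ) : RR x (s+1) N = ∑ i ∈ Finset.range (N + 1), RR x s (i + 1) := by
  rw [RR]

theorem RR_zero (x N : ℕ) : RR x 0 N = Nat.choose (x + N) x := by rw [RR]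

theorem chs1 (x n : ℕ) : ∑ i ∈ Finset.range n, Nat.choose (x + (i + 1)) x + 1
    = Nat.choose (x + n + 1) (x + 1) := by
  induction n with
  | zero => simp
  | succ n ih =>
    rw [Finset.sum_range_succ]
    have : Nat.choose (x + (n+1) + 1) (x+1) = Nat.choose (x + (n+1)) x + Nat.choose (x + (n+1)) (x+1) := by
      rw [Nat.choose_succ_succ]
    have h2 : x + n + 1 = x + (n+1) := by ring
    rw [h2] at ih
    omega

theorem chs2 (N n : ℕ) : ∑ i ∈ Finset.range n, Nat.choose (i + 1 + N) (i + 1) + 1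
    = Nat.choose (n + N + 1) n := by
  induction n with
  | zero => simp
  | succ n ih =>
    rw [Finset.sum_range_succ]
    have h2 : n + 1 + N + 1 = (n + N + 1) + 1 := by ring
    have h3 : n + 1 + N = n + N + 1 := by ring
    rw [h2, Nat.choose_succ_succ', h3]
    omega

theorem RR_row (x s N : ℕ) : RR x (s+1) N = ∑ i ∈ Finset.range (x + 1), RR (i + 1) s N := by
  induction s generalizing x N with
  | zero =>
    simp only [RR_succ, RR_zero]
    have h1 := chs1 x (N+1)
    have h2 := chs2 N (x+1)
    have h3 : x + (N+1) + 1 = x + 1 + N + 1 := by ring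
    rw [h3] at h1
    omega
  | succ s ih =>
    rw [RR_succ]
    rw [Finset.sum_congr rfl (fun i _ => ih x (i+1)), Finset.sum_comm]
    exact Finset.sum_congr rfl (fun i _ => (RR_succ _ _ _).symm)

theorem RR_symm (x s N : ℕ) : RR x s N = RR N s x := by
  induction s generalizing x N with
  | zero => simp only [RR_zero]; rw [Nat.add_comm N x, Nat.choose_symm_add]
  | succ s ih =>
    rw [RR_succ, RR_row]
    simp_rw [ih x]

theorem RR_one (s N : ℕ) : RR 1 s N = RR 0 (s+1) N := by
  induction s generalizing N with
  | zero => simp [RR_succ, RR_zero, Nat.add_comm]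
  | succ s ih =>
    rw [RR_succ, RR_succ]
    simp_rw [ih]

theorem RR_two (s N : ℕ) : RR 2 s N = RR 0 s (N+2) + ∑ j ∈ Finset.range N, RR 0 (s+1) (j+1) := by
  induction s generalizing N with
  | zero =>
    induction N with
    | zero => simp [RR_zero]
    | succ N ih =>
      rw [Finset.sum_range_succ]
      have h1 : RR 2 0 (N+1) = RR 2 0 N + (N + 2) := by
        simp only [RR_zero]
        have : 2 + (N+1) = (2 + N) + 1 := by ring
        rw [this, Nat.choose_succ_succ]
        simp; ring
      have h2 : RR 0 (0+1) (N+1) = N + 2 := by simp [RR_succ, RR_zero]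
      have h3 : RR 0 0 (N+2) = 1 := by simp [RR_zero]
      have h4 : RR 0 0 (N+1+2) = 1 := by simp [RR_zero]
      omega
  | succ s ih =>
    induction N with
    | zero =>
      have := ih 1
      simp [RR_succ, Finset.sum_range_succ] at this ⊢
      omega
    | succ N ih2 =>
      rw [RR_succ] at ih2 ⊢
      rw [Finset.sum_range_succ, ih2, ih, Finset.sum_range_succ (n := N)]
      rw [RR_succ 0 s (N+1+2), Finset.sum_range_succ (n := N+1+2), ← RR_succ, RR_succ 0 (s+1) (N+1)]
      have e1 : N + 1 + 1 = N + 2 := rfl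
      have e2 : N + 1 + 2 + 1 = N+1+1+2 := by ring
      have e3 : RR 0 (s+1) (N+2) = ∑ i ∈ Finset.range (N+1+2), RR 0 s (i+1) := RR_succ _ _ _
      rw [e2]
      omega

theorem RR_final (s L : ℕ) : RR 0 s (L+1) + ∑ j ∈ Finset.range L, RR 0 (s+1) (j+1)
    = RR L s 1 + (if L = 0 then 0 else RR (L-1) s 2) := by
  cases L with
  | zero => simp
  | succ L =>
    simp only [Nat.add_sub_cancel, Nat.succ_ne_zero, if_false]
    rw [RR_symm L s 2, RR_two, Finset.sum_range_succ, RR_symm (L+1) s 1, RR_one]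
    ring_nf

/-- avoidance of the strictly increasing pattern 123 -/
def Av (u : List ℕ) : Prop := ∀ a b c, a < b → b < c → ¬ [a,b,c].Sublist u

theorem fib (S : Set (List ℕ)) (K m : ℕ) (h : ∀ u ∈ S, u.length = m ∧ ∀ a ∈ u, a ≤ K)
    (f : List ℕ → ℕ) (n : ℕ) (hf : ∀ u ∈ S, f u < n) :
    S.ncard = ∑ i ∈ Finset.range n, {u ∈ S | f u = i}.ncard := by
  classical
  have fin : S.Finite := by
    have : {l : List (Fin (K+1)) | l.length = m}.Finite := List.finite_length_eq _ _
    refine (this.image (List.map Fin.val)).subset ?_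
    intro u hu
    obtain ⟨h1, h2⟩ := h u hu
    refine ⟨u.pmap (fun a ha => (⟨a, ha⟩ : Fin (K+1))) (fun a ha => Nat.lt_succ_of_le (h2 a ha)), ?_, ?_⟩
    · simpa using h1
    · simp [List.map_pmap]
  rw [Set.ncard_eq_toFinset_card S fin, Finset.card_eq_sum_card_fiberwise (f := f) (t := Finset.range n)]
  · refine Finset.sum_congr rfl fun i _ => ?_
    rw [← Set.ncard_coe_finset]
    congr 1
    ext u; simp
  · intro u hu
    simp at hu ⊢
    exact hf u hu

theorem Av_cons (y : ℕ) (v : List ℕ) :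
    Av (y :: v) ↔ Av v ∧ ∀ b c, y < b → b < c → ¬ [b,c].Sublist v := by
  constructor
  · intro h
    refine ⟨fun a b c h1 h2 h3 => h a b c h1 h2 (h3.cons _), fun b c h1 h2 h3 => h y b c h1 h2 (h3.cons_cons _)⟩
  · rintro ⟨h1, h2⟩ a b c hab hbc hs
    rcases List.sublist_cons_iff.1 hs with h | ⟨r, hr, h⟩
    · exact h1 a b c hab hbc h
    · simp at hr
      obtain ⟨rfl, rfl⟩ := hr
      exact h2 b c hab hbc h

theorem Av_rep (y j : ℕ) (v : List ℕ) (h : ∀ b c, y < b → b < c → ¬ [b,c].Sublist v) :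
    Av (List.replicate j y ++ v) ↔ Av v := by
  induction j with
  | zero => simp
  | succ j ih =>
    rw [List.replicate_succ, List.cons_append, Av_cons, ih]
    constructor
    · exact fun h => h.1
    · intro hv
      refine ⟨hv, ?_⟩
      clear ih
      intro b c hb hc hs
      induction j with
      | zero => exact h b c hb hc (by simpa using hs)
      | succ j ih =>
        rw [List.replicate_succ, List.cons_append] at hs
        rcases List.sublist_cons_iff.1 hs with h | ⟨r, hr, h⟩
        · exact ih h
        · simp at hr; omega

theorem Av_mid (p q : List ℕ) (y : ℕ) (hq : ∀ c ∈ q, c ≤ y) :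
    Av (p ++ y :: q) ↔ Av (p ++ q) ∧ ∀ a b, a < b → b < y → ¬ [a,b].Sublist p := by
  constructor
  · intro h
    refine ⟨fun a b c h1 h2 h3 => h a b c h1 h2 (h3.trans ?_), fun a b h1 h2 h3 => h a b y h1 h2 ?_⟩
    · exact (List.Sublist.refl p).append (List.sublist_cons_self _ _)
    · have : [a,b,y] = [a,b] ++ [y] := rfl
      rw [this]
      exact h3.append (by simp)
  · rintro ⟨h1, h2⟩ a b c hab hbc hs
    obtain ⟨s1, s2, e, k1, k2⟩ := List.sublist_append_iff.1 hs
    rcases List.sublist_cons_iff.1 k2 with h | ⟨r, hr, h⟩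
    · exact h1 a b c hab hbc (e ▸ k1.append h)
    · subst hr
      have hr : ∀ c ∈ r, c ≤ y := fun c hc => hq c (h.subset hc)
      rcases s1 with _ | ⟨a1, _ | ⟨a2, _ | ⟨a3, s1⟩⟩⟩
      · simp at e
        obtain ⟨rfl, rfl⟩ := e
        have := hr b (by simp); omega
      · simp at e
        obtain ⟨rfl, rfl, rfl⟩ := e
        have := hr c (by simp); omega
      · simp at e
        obtain ⟨rfl, rfl, rfl, rfl⟩ := e
        exact h2 a b hab hbc k1
      · simp at e

def ZZ (b x : ℕ) (M : Finset ℕ) (t N s : ℕ) : Set (List ℕ) :=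
  {u | Av u ∧ u.count b = x ∧ u.count t = N ∧ (∀ a ∈ M, u.count a ≤ 1) ∧
    (∀ a ∈ u, a = b ∨ a ∈ M ∨ a = t) ∧ u.length = x + s + N}

def WW (b x : ℕ) (M : Finset ℕ) (z t N s : ℕ) : Set (List ℕ) :=
  {u | u ∈ ZZ b x (insert z M) t N (s+1) ∧ u.count z = 1}

theorem cnt3 (a b c : ℕ) (h1 : a ≠ b) (h2 : a ≠ c) (h3 : b ≠ c) (u : List ℕ) :
    u.count a + u.count b + u.count c ≤ u.length := by
  induction u with
  | nil => simp
  | cons y u ih =>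
    simp only [List.count_cons, List.length_cons, beq_iff_eq]
    split_ifs <;> omega

theorem cnt2 (a b : ℕ) (h1 : a ≠ b) (u : List ℕ) (h : ∀ y ∈ u, y = a ∨ y = b) :
    u.count a + u.count b = u.length := by
  induction u with
  | nil => simp
  | cons y u ih =>
    have := ih (fun y hy => h y (by simp [hy]))
    have := h y (by simp)
    simp only [List.count_cons, List.length_cons, beq_iff_eq]
    split_ifs <;> omega

theorem last_split (t : ℕ) (v : List ℕ) (h : t ∈ v) : ∃ p q, v = p ++ t :: q ∧ t ∉ q := by
  induction v with
  | nil => simp at h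
  | cons y v ih =>
    by_cases hv : t ∈ v
    · obtain ⟨p, q, rfl, hq⟩ := ih hv
      exact ⟨y :: p, q, rfl, hq⟩
    · have : y = t := by simp [hv] at h; exact h.symm
      exact ⟨[], v, by simp [this], hv⟩

theorem last_inj (t : ℕ) (p q p' q' : List ℕ) (h : t ∉ q) (h' : t ∉ q')
    (e : p ++ t :: q = p' ++ t :: q') : p = p' ∧ q = q' := by
  induction p generalizing p' with
  | nil =>
    cases p' with
    | nil => simpa using e
    | cons y p' =>
      simp at e
      exact absurd (by simp [e.2]) h
  | cons y p ih =>
    cases p' with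
    | nil =>
      simp at e
      exact absurd (by simp [← e.2]) h'
    | cons y' p' =>
      simp at e
      have := ih p' e.2
      simp [e.1, this]

/-- statistic: the number of letters t from the first z on -/
def stat (z t : ℕ) (u : List ℕ) : ℕ := (u.dropWhile (fun a => decide (a ≠ z))).count t

theorem stat_eq (z t : ℕ) (hz : z ≠ t) (p q : List ℕ) (hp : z ∉ p) :
    stat z t (p ++ z :: q) = q.count t := by
  unfold stat
  induction p with
  | nil => simp [List.dropWhile_cons, List.count_cons, hz]
  | cons y p ih =>
    simp at hp
    have : y ≠ z := fun h => hp.1 h.symm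
    rw [List.cons_append, List.dropWhile_cons]
    simpa [this] using ih hp.2

theorem split1 (z : ℕ) (u : List ℕ) (h : u.count z = 1) :
    ∃ p q, u = p ++ z :: q ∧ z ∉ p ∧ z ∉ q := by
  have : z ∈ u := List.count_pos_iff.1 (by omega)
  obtain ⟨p, q, rfl, hq⟩ := last_split z u this
  refine ⟨p, q, rfl, ?_, hq⟩
  simp at h
  intro hp
  have := List.count_pos_iff.2 hp
  omega

theorem WW_bd (b x : ℕ) (M : Finset ℕ) (z t N s : ℕ) (hM : ∀ a ∈ M, b < a ∧ a < z) (hb : b < z)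
    (hz : z < t) : ∀ u ∈ WW b x M z t N s, u.length = x + (s+1) + N ∧ ∀ a ∈ u, a ≤ t := by
  rintro u ⟨⟨-, -, -, -, h, h'⟩, -⟩
  refine ⟨h', fun a ha => ?_⟩
  have := h a ha
  simp only [Finset.mem_insert] at this
  rcases this with h | (h | h) | h
  · omega
  · omega
  · have := hM a h; omega
  · omega

theorem WW_fib0 (b x : ℕ) (M : Finset ℕ) (z t N s : ℕ) (hM : ∀ a ∈ M, b < a ∧ a < z) (hb : b < z)
    (hz : z < t) : {u ∈ WW b x M z t N s | stat z t u = 0}.ncard = (ZZ b x M t (N+1) s).ncard := by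
  have hzM : z ∉ M := fun h => by have := hM z h; omega
  have htM : t ∉ M := fun h => by have := hM t h; omega
  symm
  refine Set.ncard_congr (fun v _ => (v.reverse.replace t z).reverse) ?_ ?_ ?_
  all_goals
    have key : ∀ p q, t ∉ q → ((p ++ t :: q).reverse.replace t z).reverse = p ++ z :: q := by
      intro p q hq
      simp only [List.reverse_append, List.reverse_cons, List.append_assoc]
      rw [List.replace_append_right (by simpa using hq)]
      simp
  · intro v hv
    obtain ⟨h1, h2, h3, h4, h5, h6⟩ := hv
    have htv : t ∈ v := List.count_pos_iff.1 (by omega)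
    obtain ⟨p, q, rfl, hq⟩ := last_split t v htv
    simp only [key p q hq]
    have hzv : z ∉ p ++ t :: q := fun h => by
      rcases h5 z h with h | h | h
      · omega
      · exact hzM h
      · omega
    have hzp : z ∉ p := fun h => hzv (by simp [h])
    have hzq : z ∉ q := fun h => hzv (by simp [h])
    have hqlt : ∀ c ∈ q, c < z := fun c hc => by
      rcases h5 c (by simp [hc]) with h | h | h
      · omega
      · exact (hM c h).2
      · subst h; exact absurd hc hq
    refine ⟨⟨⟨?_, ?_, ?_, ?_, ?_, ?_⟩, ?_⟩, ?_⟩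
    · rw [Av_mid _ _ _ (fun c hc => by have := hqlt c hc; omega)] at h1 ⊢
      exact ⟨h1.1, fun a c hac hc => h1.2 a c hac (by omega)⟩
    · simp [List.count_cons] at h2 ⊢
      split_ifs at h2 ⊢ <;> omega
    · simp [List.count_cons] at h3 ⊢
      split_ifs at h3 ⊢ <;> omega
    · intro a ha
      simp only [Finset.mem_insert] at ha
      rcases ha with rfl | ha
      · simp [List.count_eq_zero_of_not_mem hzp, List.count_eq_zero_of_not_mem hzq]
      · have := h4 a ha
        have h7 : a ≠ z := fun h => hzM (h ▸ ha)
        simp [List.count_cons] at this ⊢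
        split_ifs at this ⊢ <;> omega
    · intro a ha
      simp only [Finset.mem_insert]
      by_cases haz : a = z
      · simp [haz]
      · have := h5 a (by simp [haz] at ha ⊢; tauto)
        tauto
    · simp at h6 ⊢; omega
    · simp [List.count_eq_zero_of_not_mem hzp, List.count_eq_zero_of_not_mem hzq]
    · rw [stat_eq z t (by omega) p q hzp]
      exact List.count_eq_zero_of_not_mem hq
  · intro v w hv hw e
    obtain ⟨h1, h2, h3, h4, h5, h6⟩ := hv
    obtain ⟨h1', h2', h3', h4', h5', h6'⟩ := hw
    have htv : t ∈ v := List.count_pos_iff.1 (by omega)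
    have htw : t ∈ w := List.count_pos_iff.1 (by omega)
    obtain ⟨p, q, rfl, hq⟩ := last_split t v htv
    obtain ⟨p', q', rfl, hq'⟩ := last_split t w htw
    simp only [key p q hq, key p' q' hq'] at e
    have n1 : z ∉ q := fun h => by
      rcases h5 z (by simp [h]) with h | h | h
      · omega
      · exact hzM h
      · omega
    have n2 : z ∉ q' := fun h => by
      rcases h5' z (by simp [h]) with h | h | h
      · omega
      · exact hzM h
      · omega
    obtain ⟨rfl, rfl⟩ := last_inj z p q p' q' n1 n2 e
    rfl
  · rintro u ⟨⟨⟨h1, h2, h3, h4, h5, h6⟩, h7⟩, h8⟩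
    obtain ⟨p, q, rfl, hp, hq⟩ := split1 z u h7
    rw [stat_eq z t (by omega) p q hp] at h8
    have htq : t ∉ q := List.count_eq_zero.1 h8
    have hlt : ∀ c, c ∈ p ∨ c ∈ q → c ≠ t → c < z := fun c hc hct => by
      have hcz : c ≠ z := by rintro rfl; tauto
      have := h5 c (by simp; tauto)
      simp only [Finset.mem_insert] at this
      rcases this with h | (h | h) | h
      · omega
      · omega
      · exact (hM c h).2
      · omega
    have hqlt : ∀ c ∈ q, c < z := fun c hc => hlt c (Or.inr hc) (by rintro rfl; exact htq hc)
    refine ⟨p ++ t :: q, ⟨?_, ?_, ?_, ?_, ?_, ?_⟩, key p q htq⟩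
    · rw [Av_mid _ _ _ (fun c hc => by have := hqlt c hc; omega)] at h1 ⊢
      refine ⟨h1.1, fun a c hac hc hs => h1.2 a c hac (hlt c (Or.inl (hs.subset (by simp))) (by omega)) hs⟩
    · simp [List.count_cons] at h2 ⊢
      split_ifs at h2 ⊢ <;> omega
    · simp [List.count_cons] at h3 ⊢
      split_ifs at h3 ⊢ <;> omega
    · intro a ha
      have := h4 a (by simp [ha])
      have h7 : a ≠ t := fun h => htM (h ▸ ha)
      simp [List.count_cons] at this ⊢
      split_ifs at this ⊢ <;> omega
    · intro a ha
      by_cases haz : a = t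
      · simp [haz]
      · have ha' : a ∈ p ∨ a ∈ q := by simp [haz] at ha; exact ha
        have h9 := h5 a (by simp; tauto)
        have h10 := hlt a ha' haz
        simp only [Finset.mem_insert] at h9
        rcases h9 with h | (h | h) | h
        · simp [h]
        · omega
        · simp [h]
        · omega
    · simp at h6 ⊢; omega

theorem WW_fib1 (b x : ℕ) (M : Finset ℕ) (z t N s : ℕ) (hM : ∀ a ∈ M, b < a ∧ a < z) (hb : b < z)
    (hz : z < t) (i : ℕ) (hi : 0 < i) (hiN : i ≤ N) :
    {u ∈ WW b x M z t N s | stat z t u = i}.ncard = (ZZ b x M t i s).ncard := by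
  have hzM : z ∉ M := fun h => by have := hM z h; omega
  have htM : t ∉ M := fun h => by have := hM t h; omega
  have hinj : Function.Injective (fun v : List ℕ => List.replicate (N - i) t ++ z :: v) := by
    intro v w h
    simpa using h
  rw [← Set.ncard_image_of_injective (ZZ b x M t i s) hinj]
  congr 1
  have avz : ∀ v : List ℕ, (∀ a ∈ v, a < z ∨ a = t) → 
      (Av (List.replicate (N - i) t ++ z :: v) ↔ Av v) := by
    intro v hv
    rw [Av_rep, Av_cons]
    · refine ⟨fun h => h.1, fun h => ⟨h, fun c d hc hd hs => ?_⟩⟩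
      have h1 := hv c (hs.subset (by simp))
      have h2 := hv d (hs.subset (by simp))
      omega
    · intro c d hc hd hs
      have h1 := hs.subset (show d ∈ [c, d] by simp)
      simp at h1
      rcases h1 with h1 | h1
      · omega
      · have := hv d h1; omega
  ext u
  constructor
  · rintro ⟨⟨⟨h1, h2, h3, h4, h5, h6⟩, h7⟩, h8⟩
    obtain ⟨p, q, rfl, hp, hq⟩ := split1 z u h7
    rw [stat_eq z t (by omega) p q hp] at h8
    have htq : t ∈ q := List.count_pos_iff.1 (by omega)
    have hlt : ∀ c, c ∈ p ∨ c ∈ q → c ≠ t → c < z := fun c hc hct => by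
      have hcz : c ≠ z := by rintro rfl; tauto
      have := h5 c (by simp; tauto)
      simp only [Finset.mem_insert] at this
      rcases this with h | (h | h) | h
      · omega
      · omega
      · exact (hM c h).2
      · omega
    have hpt : ∀ c ∈ p, c = t := by
      intro c hc
      by_contra hct
      refine h1 c z t (hlt c (Or.inl hc) hct) hz ?_
      have : [c,z,t] = [c] ++ z :: [t] := rfl
      rw [this]
      exact (List.singleton_sublist.2 hc).append ((List.singleton_sublist.2 htq).cons_cons _)
    have hprep := List.eq_replicate_of_mem hpt
    have hlen : p.length = N - i := by
      have : p.count t = p.length := by rw [hprep]; simp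
      simp [List.count_cons] at h3
      split_ifs at h3 <;> omega
    rw [hlen] at hprep
    subst hprep
    have hqq : ∀ a ∈ q, a < z ∨ a = t := fun a ha => by
      by_cases h : a = t
      · exact Or.inr h
      · exact Or.inl (hlt a (Or.inr ha) h)
    refine ⟨q, ⟨(avz q hqq).1 h1, ?_, h8, ?_, ?_, ?_⟩, rfl⟩
    · simp [List.count_cons, List.count_replicate] at h2
      split_ifs at h2 <;> omega
    · intro a ha
      have := h4 a (by simp [ha])
      simp at this
      have := List.count_le_count_cons (a := a) (b := z) (l := q)
      omega
    · intro a ha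
      have := h5 a (by simp [ha])
      simp only [Finset.mem_insert] at this
      rcases this with h | (h | h) | h
      · exact Or.inl h
      · subst h; exact absurd ha hq
      · tauto
      · tauto
    · simp at h6; omega
  · rintro ⟨v, ⟨h1, h2, h3, h4, h5, h6⟩, rfl⟩
    have hvv : ∀ a ∈ v, a < z ∨ a = t := fun a ha => by
      rcases h5 a ha with h | h | h
      · omega
      · have := hM a h; omega
      · omega
    have hzv : z ∉ v := fun h => by have := hvv z h; omega
    have hzr : z ∉ List.replicate (N - i) t := fun h => by simp at h; omega
    refine ⟨⟨⟨(avz v hvv).2 h1, ?_, ?_, ?_, ?_, ?_⟩, ?_⟩, ?_⟩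
    · simp [List.count_cons, List.count_replicate]
      split_ifs <;> omega
    · simp [List.count_cons]
      split_ifs <;> omega
    · intro a ha
      simp only [Finset.mem_insert] at ha
      rcases ha with rfl | ha
      · simp [List.count_eq_zero_of_not_mem hzr, List.count_eq_zero_of_not_mem hzv]
      · have h7 := h4 a ha
        have h8 := hM a ha
        simp [List.count_cons, List.count_replicate]
        split_ifs <;> omega
    · intro a ha
      simp at ha
      simp only [Finset.mem_insert]
      rcases ha with h | h | h
      · tauto
      · tauto
      · have := h5 a h; tauto
    · simp; omega
    · simp [List.count_eq_zero_of_not_mem hzr, List.count_eq_zero_of_not_mem hzv]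
    · rw [stat_eq z t (by omega) _ _ hzr, h3]

theorem WW_card (b x : ℕ) (M : Finset ℕ) (z t N s : ℕ) (hM : ∀ a ∈ M, b < a ∧ a < z) (hb : b < z)
    (hz : z < t) : (WW b x M z t N s).ncard = ∑ i ∈ Finset.range (N+1), (ZZ b x M t (i+1) s).ncard := by
  rw [fib (WW b x M z t N s) t _ (WW_bd b x M z t N s hM hb hz) (stat z t) (N+1)]
  · rw [Finset.sum_range_succ', Finset.sum_range_succ, WW_fib0 b x M z t N s hM hb hz]
    congr 1
    refine Finset.sum_congr rfl fun i hi => ?_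
    rw [Finset.mem_range] at hi
    exact WW_fib1 b x M z t N s hM hb hz (i+1) (by omega) (by omega)
  · rintro u ⟨⟨-, -, h, -⟩, -⟩
    have : stat z t u ≤ u.count t := (List.dropWhile_sublist _).count_le _
    omega

def TT (b t x N : ℕ) : Set (List ℕ) :=
  {u | u.count b = x ∧ u.count t = N ∧ ∀ a ∈ u, a = b ∨ a = t}

theorem TT_card (b t : ℕ) (hbt : b < t) (x N : ℕ) : (TT b t x N).ncard = Nat.choose (x+N) x := by
  induction x generalizing N with
  | zero =>
    have : TT b t 0 N = {List.replicate N t} := by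
      ext u
      simp only [TT, Set.mem_ofPred_eq, Set.mem_singleton_iff]
      constructor
      · rintro ⟨h1, h2, h3⟩
        have h4 := cnt2 b t (by omega) u h3
        rw [List.eq_replicate_iff]
        refine ⟨by omega, fun a ha => ?_⟩
        rcases h3 a ha with rfl | h
        · exact absurd ha (List.count_eq_zero.1 h1)
        · exact h
      · rintro rfl
        refine ⟨?_, by simp, fun a ha => Or.inr (List.eq_of_mem_replicate ha)⟩
        rw [List.count_replicate]; simp; omega
    simp [this]
  | succ x ihx =>
    induction N with
    | zero =>
      have : TT b t (x+1) 0 = {List.replicate (x+1) b} := by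
        ext u
        simp only [TT, Set.mem_ofPred_eq, Set.mem_singleton_iff]
        constructor
        · rintro ⟨h1, h2, h3⟩
          have h4 := cnt2 b t (by omega) u h3
          rw [List.eq_replicate_iff]
          refine ⟨by omega, fun a ha => ?_⟩
          rcases h3 a ha with h | rfl
          · exact h
          · exact absurd ha (List.count_eq_zero.1 h2)
        · rintro rfl
          refine ⟨by simp, ?_, fun a ha => Or.inl (List.eq_of_mem_replicate ha)⟩
          rw [List.count_replicate]; simp; omega
      simp [this]
    | succ N ihN =>
      have hbd : ∀ u ∈ TT b t (x+1) (N+1), u.length = x + 1 + (N + 1) ∧ ∀ a ∈ u, a ≤ t := by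
        rintro u ⟨h1, h2, h3⟩
        have h4 := cnt2 b t (by omega) u h3
        exact ⟨by omega, fun a ha => by have := h3 a ha; omega⟩
      rw [fib _ t _ hbd (fun u => if u.head? = some b then 0 else 1) 2
        (by intro u _; split_ifs <;> omega)]
      rw [Finset.sum_range_succ, Finset.sum_range_one]
      have e0 : {u ∈ TT b t (x+1) (N+1) | (if u.head? = some b then 0 else 1) = 0}
          = (fun v => b :: v) '' TT b t x (N+1) := by
        ext u
        constructor
        · rintro ⟨⟨h1, h2, h3⟩, h4⟩
          rcases u with _ | ⟨a, u⟩
          · simp at h1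
          · simp at h4
            subst h4
            refine ⟨u, ⟨?_, ?_, fun c hc => h3 c (by simp [hc])⟩, rfl⟩
            · simpa using h1
            · simp [List.count_cons] at h2; split_ifs at h2 <;> omega
        · rintro ⟨v, ⟨h1, h2, h3⟩, rfl⟩
          refine ⟨⟨by simp [h1], ?_, ?_⟩, by simp⟩
          · simp [List.count_cons]; split_ifs <;> omega
          · intro a ha
            simp at ha
            rcases ha with h | h
            · exact Or.inl h
            · exact h3 a h
      have e1 : {u ∈ TT b t (x+1) (N+1) | (if u.head? = some b then 0 else 1) = 1}
          = (fun v => t :: v) '' TT b t (x+1) N := by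
        ext u
        constructor
        · rintro ⟨⟨h1, h2, h3⟩, h4⟩
          rcases u with _ | ⟨a, u⟩
          · simp at h1
          · simp at h4
            have h5 : a = t := by have := h3 a (by simp); tauto
            subst h5
            refine ⟨u, ⟨?_, ?_, fun c hc => h3 c (by simp [hc])⟩, rfl⟩
            · simp [List.count_cons] at h1; split_ifs at h1 <;> omega
            · simpa using h2
        · rintro ⟨v, ⟨h1, h2, h3⟩, rfl⟩
          refine ⟨⟨?_, by simp [h2], ?_⟩, ?_⟩
          · simp [List.count_cons]; split_ifs <;> omega
          · intro a ha
            simp at ha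
            rcases ha with h | h
            · exact Or.inr h
            · exact h3 a h
          · simp; omega
      rw [e0, e1, Set.ncard_image_of_injective _ (List.cons_injective),
        Set.ncard_image_of_injective _ (List.cons_injective), ihx, ihN]
      have : x + 1 + (N+1) = (x + (N + 1)) + 1 := by ring
      rw [this, Nat.choose_succ_succ']
      congr 2
      ring

theorem ZZ_base (b x t N s : ℕ) (hbt : b < t) :
    (ZZ b x ∅ t N s).ncard = Nat.choose 0 s * RR x s N := by
  cases s with
  | zero =>
    rw [RR_zero, ← TT_card b t hbt x N, Nat.choose_self, one_mul]
    congr 1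
    ext u
    constructor
    · rintro ⟨h1, h2, h3, h4, h5, h6⟩
      exact ⟨h2, h3, fun a ha => by have := h5 a ha; simp at this; exact this⟩
    · rintro ⟨h2, h3, h5⟩
      have h4 := cnt2 b t (by omega) u h5
      refine ⟨?_, h2, h3, by simp, fun a ha => by have := h5 a ha; tauto, by omega⟩
      intro p q r hp hq hs
      have h7 := h5 p (hs.subset (by simp))
      have h8 := h5 q (hs.subset (by simp))
      have h9 := h5 r (hs.subset (by simp))
      omega
  | succ s =>
    have : ZZ b x ∅ t N (s+1) = ∅ := by
      ext u
      simp only [Set.mem_empty_iff_false, iff_false]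
      rintro ⟨h1, h2, h3, h4, h5, h6⟩
      have h4 := cnt2 b t (by omega) u (fun a ha => by have := h5 a ha; simp at this; exact this)
      omega
    simp [this]

theorem ZZ_card (b x t : ℕ) (hbt : b < t) (M : Finset ℕ) : (∀ a ∈ M, b < a ∧ a < t) →
    ∀ N s, (ZZ b x M t N s).ncard = M.card.choose s * RR x s N := by
  induction M using Finset.induction_on_max with
  | empty => intro _ N s; simpa using ZZ_base b x t N s hbt
  | insert z M hlt ih =>
    intro hM N s
    have hz := hM z (by simp)
    have hM1 : ∀ a ∈ M, b < a ∧ a < t := fun a ha => hM a (by simp [ha])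
    have hM2 : ∀ a ∈ M, b < a ∧ a < z := fun a ha => ⟨(hM1 a ha).1, hlt a ha⟩
    have hzM : z ∉ M := fun h => by have := hlt z h; omega
    have ih := ih hM1
    have hbd : ∀ u ∈ ZZ b x (insert z M) t N s, u.length = x + s + N ∧ ∀ a ∈ u, a ≤ t := by
      rintro u ⟨-, -, -, -, h, h'⟩
      refine ⟨h', fun a ha => ?_⟩
      rcases h a ha with h | h | h
      · omega
      · have := hM a h; omega
      · omega
    rw [fib _ t _ hbd (fun u => u.count z) 2
      (by rintro u ⟨-, -, -, h, -⟩; have := h z (by simp); omega)]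
    rw [Finset.sum_range_succ, Finset.sum_range_one]
    have e0 : {u ∈ ZZ b x (insert z M) t N s | u.count z = 0} = ZZ b x M t N s := by
      ext u
      constructor
      · rintro ⟨⟨h1, h2, h3, h4, h5, h6⟩, h7⟩
        refine ⟨h1, h2, h3, fun a ha => h4 a (by simp [ha]), fun a ha => ?_, h6⟩
        have := h5 a ha
        simp only [Finset.mem_insert] at this
        rcases this with h | (rfl | h) | h
        · tauto
        · exact absurd ha (List.count_eq_zero.1 h7)
        · tauto
        · tauto
      · rintro ⟨h1, h2, h3, h4, h5, h6⟩
        have h7 : u.count z = 0 := by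
          refine List.count_eq_zero.2 fun h => ?_
          rcases h5 z h with h | h | h
          · omega
          · exact hzM h
          · omega
        refine ⟨⟨h1, h2, h3, fun a ha => ?_, fun a ha => ?_, h6⟩, h7⟩
        · simp only [Finset.mem_insert] at ha
          rcases ha with rfl | ha
          · omega
          · exact h4 a ha
        · have := h5 a ha
          simp only [Finset.mem_insert]
          tauto
    rw [e0, ih, Finset.card_insert_of_notMem hzM]
    cases s with
    | zero =>
      have e1 : {u ∈ ZZ b x (insert z M) t N 0 | u.count z = 1} = ∅ := by
        ext u
        simp only [Set.mem_empty_iff_false, iff_false]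
        rintro ⟨⟨h1, h2, h3, h4, h5, h6⟩, h7⟩
        have := cnt3 b t z (by omega) (by omega) (by omega) u
        omega
      simp [e1]
    | succ s =>
      have e1 : {u ∈ ZZ b x (insert z M) t N (s+1) | u.count z = 1} = WW b x M z t N s := rfl
      rw [e1, WW_card b x M z t N s hM2 hz.1 hz.2]
      simp_rw [ih]
      rw [← Finset.mul_sum, ← RR_succ, Nat.choose_succ_succ']
      ring

theorem WW_card' (b x : ℕ) (M : Finset ℕ) (z t N s : ℕ) (hM : ∀ a ∈ M, b < a ∧ a < z) (hb : b < z)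
    (hz : z < t) : (WW b x M z t N s).ncard = M.card.choose s * RR x (s+1) N := by
  rw [WW_card b x M z t N s hM hb hz, RR_succ, Finset.mul_sum]
  refine Finset.sum_congr rfl fun i _ => ?_
  exact ZZ_card b x t (by omega) M (fun a ha => by have := hM a ha; omega) _ _

def SA (k m : ℕ) : Set (List ℕ) :=
  {u | Av u ∧ u.length = m ∧ (∀ a ∈ u, 1 ≤ a ∧ a ≤ k+2) ∧ k+2 ∈ u ∧
    (∀ a, a ≤ k → u.count a ≤ 1) ∧ ¬ [k+2,k+1,k+1].Sublist u}

def SB (k m : ℕ) : Set (List ℕ) :=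
  {u | Av u ∧ u.length = m ∧ (∀ a ∈ u, 1 ≤ a ∧ a ≤ k+2) ∧ k+2 ∈ u ∧
    (∀ a, 2 ≤ a → a ≤ k+1 → u.count a ≤ 1) ∧ u.count (k+2) ≤ 2}

theorem rep2 (z : ℕ) (u : List ℕ) : 2 ≤ u.count z ↔ [z,z].Sublist u := by
  rw [← List.replicate_sublist_iff]; rfl

theorem strip (z t : ℕ) (hzt : z < t) (i : ℕ) (u : List ℕ) (h1 : Av u) (h2 : ∀ a ∈ u, a ≤ z ∨ a = t)
    (h3 : t ∈ u) (h4 : ¬ [t,z,z].Sublist u) (h5 : u.count z = i + 1) :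
    ∃ v, u = List.replicate i z ++ v := by
  induction i generalizing u with
  | zero => exact ⟨u, by simp⟩
  | succ i ih =>
    rcases u with _ | ⟨a, u⟩
    · simp at h3
    by_cases haz : a = z
    · subst haz
      obtain ⟨v, rfl⟩ := ih u ((Av_cons _ _).1 h1).1 (fun c hc => h2 c (by simp [hc]))
        (by simp at h3; rcases h3 with h | h
            · omega
            · exact h)
        (fun h => h4 (h.cons _)) (by simpa using h5)
      exact ⟨v, by simp [List.replicate_succ]⟩
    · exfalso
      have hc : 2 ≤ u.count z := by
        simp [List.count_cons, haz] at h5; omega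
      by_cases hat : a = t
      · subst hat
        exact h4 (((rep2 z u).1 hc).cons_cons _)
      · have haz' : a < z := by have := h2 a (by simp); omega
        have htu : t ∈ u := by simp at h3; rcases h3 with h | h
                               · omega
                               · exact h
        obtain ⟨p, q, rfl⟩ := List.append_of_mem htu
        by_cases hzp : z ∈ p
        · refine h1 a z t haz' hzt (List.Sublist.cons_cons _ ?_)
          have : [z,t] = [z] ++ [t] := rfl
          rw [this]
          exact (List.singleton_sublist.2 hzp).append (by simp)
        · apply h4
          simp [List.count_cons, List.count_eq_zero_of_not_mem hzp] at hc
          have hc : 2 ≤ q.count z := by split_ifs at hc <;> omega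
          refine List.Sublist.cons _ ?_
          exact (((rep2 z q).1 hc).cons_cons _).trans (List.sublist_append_right _ _)

theorem SA_fib (k m s L : ℕ) (hm : m = s + L + 1) :
    {u ∈ SA k m | m - u.count (k+1) - u.count (k+2) = s}.ncard
      = k.choose s * (RR 0 s (L+1) + ∑ j ∈ Finset.range L, RR 0 (s+1) (j+1)) := by
  have hle : ∀ u ∈ {u ∈ SA k m | m - u.count (k+1) - u.count (k+2) = s},
      u.count (k+1) + u.count (k+2) = L + 1 ∧ u.count 0 = 0 ∧ 1 ≤ u.count (k+2) := by
    rintro u ⟨⟨h1, h2, h3, h4, h5, h6⟩, h7⟩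
    have := cnt3 0 (k+1) (k+2) (by omega) (by omega) (by omega) u
    have h8 : u.count 0 = 0 := List.count_eq_zero.2 fun h => by have := h3 0 h; omega
    have h9 := List.count_pos_iff.2 h4
    omega
  rw [fib _ (k+2) m (by rintro u ⟨⟨h1, h2, h3, h4, h5, h6⟩, h7⟩; exact ⟨h2, fun a ha => (h3 a ha).2⟩)
    (fun u => u.count (k+1)) (L+1) (by intro u hu; have := hle u hu; omega)]
  rw [Finset.sum_range_succ', mul_add, add_comm]
  have cardI : (Finset.Icc 1 k).card = k := by simp
  congr 1
  · have := ZZ_card 0 0 (k+2) (by omega) (Finset.Icc 1 k) (fun a ha => by simp at ha; omega) (L+1) s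
    rw [cardI] at this
    rw [← this]
    congr 1
    ext u
    constructor
    · rintro ⟨hu, hz⟩
      obtain ⟨g1, g2, g3⟩ := hle u hu
      obtain ⟨⟨h1, h2, h3, h4, h5, h6⟩, h7⟩ := hu
      refine ⟨h1, g2, by omega, fun a ha => h5 a (by simp at ha; omega), fun a ha => ?_, by omega⟩
      have h8 := h3 a ha
      have h9 : a ≠ k+1 := by rintro rfl; exact absurd ha (List.count_eq_zero.1 hz)
      simp only [Finset.mem_Icc]
      omega
    · rintro ⟨h1, h2, h3, h4, h5, h6⟩
      have h0 : 0 ∉ u := List.count_eq_zero.1 h2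
      have hz : k+1 ∉ u := fun h => by have := h5 _ h; simp at this
      have hz' := List.count_eq_zero_of_not_mem hz
      refine ⟨⟨⟨h1, by omega, fun a ha => ?_, List.count_pos_iff.1 (by omega), fun a ha => ?_, fun hs => ?_⟩, by omega⟩, hz'⟩
      · have := h5 a ha
        have : a ≠ 0 := by rintro rfl; exact h0 ha
        simp only [Finset.mem_Icc] at *
        omega
      · by_cases ha0 : a = 0
        · subst ha0; omega
        · exact h4 a (by simp; omega)
      · exact hz (hs.subset (by simp))
  · rw [← Finset.sum_range_reflect (fun j => RR 0 (s+1) (j+1)) L, Finset.mul_sum]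
    refine Finset.sum_congr rfl fun i hi => ?_
    rw [Finset.mem_range] at hi
    have hLi : L - 1 - i + 1 = L - i := by omega
    rw [hLi]
    have := WW_card' 0 0 (Finset.Icc 1 k) (k+1) (k+2) (L-i) s (fun a ha => by simp at ha; omega) (by omega) (by omega)
    rw [cardI] at this
    rw [← this]
    have hinj : Function.Injective (fun v : List ℕ => List.replicate i (k+1) ++ v) := by
      intro v w h
      simpa using h
    rw [← Set.ncard_image_of_injective (WW 0 0 (Finset.Icc 1 k) (k+1) (k+2) (L-i) s) hinj]
    congr 1
    have avr : ∀ v : List ℕ, (∀ a ∈ v, a ≤ k+2) → (Av (List.replicate i (k+1) ++ v) ↔ Av v) := by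
      intro v hv
      refine Av_rep _ _ _ ?_
      intro b c hb hc hs
      have := hv c (hs.subset (by simp))
      omega
    ext u
    constructor
    · rintro ⟨hu, hz⟩
      obtain ⟨g1, g2, g3⟩ := hle u hu
      obtain ⟨⟨h1, h2, h3, h4, h5, h6⟩, h7⟩ := hu
      obtain ⟨v, rfl⟩ := strip (k+1) (k+2) (by omega) i u h1 (fun a ha => by have := h3 a ha; omega) h4 h6 hz
      have hv2 : v.count (k+2) = L - i := by
        simp [List.count_replicate] at g1 hz
        omega
      have hvz : v.count (k+1) = 1 := by simp at hz; omega
      have hvm : ∀ a ∈ v, 1 ≤ a ∧ a ≤ k + 2 := fun a ha => h3 a (by simp [ha])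
      refine ⟨v, ⟨⟨(avr v (fun a ha => (hvm a ha).2)).1 h1, ?_, hv2, fun a ha => ?_, fun a ha => ?_, ?_⟩, hvz⟩, rfl⟩
      · simp at g2; exact g2.2
      · simp only [Finset.mem_insert, Finset.mem_Icc] at ha
        rcases ha with rfl | ha
        · omega
        · have := h5 a (by omega)
          simp at this; omega
      · have := hvm a ha
        simp only [Finset.mem_insert, Finset.mem_Icc]
        omega
      · simp at h2; omega
    · rintro ⟨v, ⟨⟨h1, h2, h3, h4, h5, h6⟩, h7⟩, rfl⟩
      have h0 : 0 ∉ v := List.count_eq_zero.1 h2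
      have hvm : ∀ a ∈ v, 1 ≤ a ∧ a ≤ k + 2 := fun a ha => by
        have := h5 a ha
        have : a ≠ 0 := by rintro rfl; exact h0 ha
        simp only [Finset.mem_insert, Finset.mem_Icc] at *
        omega
      refine ⟨⟨⟨(avr v (fun a ha => (hvm a ha).2)).2 h1, ?_, fun a ha => ?_, ?_, fun a ha => ?_, fun hs => ?_⟩, ?_⟩, ?_⟩
      · simp; omega
      · simp at ha
        rcases ha with ha | ha
        · omega
        · exact hvm a ha
      · exact List.mem_append_right _ (List.count_pos_iff.1 (by omega))
      · have h8 : v.count a ≤ 1 := by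
          by_cases ha0 : a = 0
          · subst ha0; omega
          · exact h4 a (by simp; omega)
        simp [List.count_replicate]
        split_ifs <;> omega
      · obtain ⟨s1, s2, e, k1, k2⟩ := List.sublist_append_iff.1 hs
        rcases s1 with _ | ⟨a1, s1⟩
        · simp at e
          subst e
          have : 2 ≤ v.count (k+1) := (rep2 _ _).2 ((List.sublist_cons_self _ _).trans k2)
          omega
        · have : a1 = k + 1 := List.eq_of_mem_replicate (k1.subset (by simp))
          simp at e
          omega
      · simp [List.count_replicate]; omega
      · simp; omega

theorem SB_fib (k m s L : ℕ) (hm : m = s + L + 1) :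
    {u ∈ SB k m | m - u.count 1 - u.count (k+2) = s}.ncard
      = k.choose s * (RR L s 1 + (if L = 0 then 0 else RR (L-1) s 2)) := by
  have hle : ∀ u ∈ {u ∈ SB k m | m - u.count 1 - u.count (k+2) = s},
      u.count 1 + u.count (k+2) = L + 1 ∧ 1 ≤ u.count (k+2) := by
    rintro u ⟨⟨h1, h2, h3, h4, h5, h6⟩, h7⟩
    have := cnt3 0 1 (k+2) (by omega) (by omega) (by omega) u
    have h9 := List.count_pos_iff.2 h4
    omega
  have cardI : (Finset.Icc 2 (k+1)).card = k := by simp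
  have main : ∀ c x, 1 ≤ c → c ≤ 2 → x + c = L + 1 → 
      {u ∈ {u ∈ SB k m | m - u.count 1 - u.count (k+2) = s} | u.count (k+2) = c}.ncard
        = k.choose s * RR x s c := by
    intro c x hc1 hc2 hx
    have := ZZ_card 1 x (k+2) (by omega) (Finset.Icc 2 (k+1)) (fun a ha => by simp at ha; omega) c s
    rw [cardI] at this
    rw [← this]
    congr 1
    ext u
    constructor
    · rintro ⟨hu, hz⟩
      obtain ⟨g1, g3⟩ := hle u hu
      obtain ⟨⟨h1, h2, h3, h4, h5, h6⟩, h7⟩ := hu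
      refine ⟨h1, by omega, hz, fun a ha => ?_, fun a ha => ?_, by omega⟩
      · simp only [Finset.mem_Icc] at ha
        exact h5 a (by omega) (by omega)
      · have := h3 a ha
        simp only [Finset.mem_Icc]
        omega
    · rintro ⟨h1, h2, h3, h4, h5, h6⟩
      refine ⟨⟨⟨h1, by omega, fun a ha => ?_, List.count_pos_iff.1 (by omega), fun a ha ha' => ?_, by omega⟩, by omega⟩, h3⟩
      · have := h5 a ha
        simp only [Finset.mem_Icc] at this
        omega
      · exact h4 a (by simp; omega)
  rw [fib _ (k+2) m (by rintro u ⟨⟨h1, h2, h3, h4, h5, h6⟩, h7⟩; exact ⟨h2, fun a ha => (h3 a ha).2⟩)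
    (fun u => u.count (k+2)) 3 (by rintro u ⟨⟨h1, h2, h3, h4, h5, h6⟩, h7⟩; omega)]
  rw [Finset.sum_range_succ, Finset.sum_range_succ, Finset.sum_range_one]
  have e0 : {u ∈ {u ∈ SB k m | m - u.count 1 - u.count (k+2) = s} | u.count (k+2) = 0} = ∅ := by
    ext u
    simp only [Set.mem_empty_iff_false, iff_false]
    rintro ⟨hu, hz⟩
    have := hle u hu
    omega
  rw [e0, main 1 L (by omega) (by omega) (by omega), Set.ncard_empty, zero_add, mul_add]
  congr 1
  split_ifs with hL
  · have e0 : {u ∈ {u ∈ SB k m | m - u.count 1 - u.count (k+2) = s} | u.count (k+2) = 2} = ∅ := by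
      ext u
      simp only [Set.mem_empty_iff_false, iff_false]
      rintro ⟨hu, hz⟩
      have := hle u hu
      omega
    rw [e0]; simp
  · exact main 2 (L-1) (by omega) (by omega) (by omega)

theorem SA_eq_SB (k m : ℕ) : (SA k m).ncard = (SB k m).ncard := by
  rw [fib (SA k m) (k+2) m (by rintro u ⟨h1, h2, h3, h4, h5, h6⟩; exact ⟨h2, fun a ha => (h3 a ha).2⟩)
    (fun u => m - u.count (k+1) - u.count (k+2)) m (by
      rintro u ⟨h1, h2, h3, h4, h5, h6⟩
      have h9 := List.count_pos_iff.2 h4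
      have : u.count (k+2) ≤ u.length := List.count_le_length
      omega)]
  rw [fib (SB k m) (k+2) m (by rintro u ⟨h1, h2, h3, h4, h5, h6⟩; exact ⟨h2, fun a ha => (h3 a ha).2⟩)
    (fun u => m - u.count 1 - u.count (k+2)) m (by
      rintro u ⟨h1, h2, h3, h4, h5, h6⟩
      have h9 := List.count_pos_iff.2 h4
      have : u.count (k+2) ≤ u.length := List.count_le_length
      omega)]
  refine Finset.sum_congr rfl fun s hs => ?_
  rw [Finset.mem_range] at hs
  rw [SA_fib k m s (m - s - 1) (by omega), SB_fib k m s (m - s - 1) (by omega), RR_final]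

def RG : ℕ → List ℕ → Prop
  | _, [] => True
  | m, a :: l => 1 ≤ a ∧ a ≤ m + 1 ∧ RG (max m a) l

theorem RG_iff (m : ℕ) (l : List ℕ) : RG m l ↔ (∀ x ∈ l, 1 ≤ x) ∧
    ∀ i, i < l.length → l.getD i 0 ≤ max m ((l.take i).foldr max 0) + 1 := by
  induction l generalizing m with
  | nil => simp [RG]
  | cons a l ih =>
    rw [RG, ih]
    constructor
    · rintro ⟨h1, h2, h3, h4⟩
      refine ⟨?_, ?_⟩
      · intro x hx
        simp at hx
        rcases hx with rfl | hx
        · exact h1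
        · exact h3 x hx
      · intro i hi
        cases i with
        | zero => simpa using h2
        | succ i =>
          have := h4 i (by simpa using hi)
          simp only [List.getD_cons_succ, List.take_succ_cons, List.foldr_cons]
          omega
    · rintro ⟨h1, h2⟩
      refine ⟨h1 a (by simp), ?_, fun x hx => h1 x (by simp [hx]), fun i hi => ?_⟩
      · simpa using h2 0 (by simp)
      · have := h2 (i+1) (by simpa using hi)
        simp only [List.getD_cons_succ, List.take_succ_cons, List.foldr_cons] at this
        omega

theorem IsRGF_iff (w : List ℕ) : IsRGF w ↔ RG 0 w := by
  rw [RG_iff, IsRGF]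
  constructor
  · rintro ⟨h1, h2, h3⟩
    refine ⟨h1, fun i hi => ?_⟩
    cases i with
    | zero =>
      rw [h2 (by rintro rfl; simp at hi)]
      omega
    | succ i => have := h3 i hi; omega
  · rintro ⟨h1, h2⟩
    refine ⟨h1, fun hw => ?_, fun i hi => by have := h2 (i+1) hi; omega⟩
    rcases w with _ | ⟨a, w⟩
    · simp at hw
    · have h3 := h1 a (by simp)
      have h4 := h2 0 (by simp)
      simp at h4 ⊢
      omega

theorem pat1123 (w : List ℕ) : PatAvoids w [1,1,2,3] ↔
    ∀ a b c, a < b → b < c → ¬ [a,a,b,c].Sublist w := by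
  constructor
  · intro h a b c hab hbc hs
    refine h ⟨_, hs, rfl, ?_⟩
    intro i j hi hj
    simp at hi hj
    interval_cases i <;> interval_cases j <;> simp <;> omega
  · rintro h ⟨s, hs, hl, ho⟩
    rcases s with _ | ⟨a, _ | ⟨a', _ | ⟨b, _ | ⟨c, _ | ⟨d, s⟩⟩⟩⟩⟩ <;> simp at hl
    have h1 := ho 0 1 (by simp) (by simp)
    have h2 := ho 1 0 (by simp) (by simp)
    have h3 := ho 1 2 (by simp) (by simp)
    have h4 := ho 2 3 (by simp) (by simp)
    simp at h1 h2 h3 h4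
    have : a' = a := by omega
    subst this
    exact h a' b c h3 h4 hs

theorem pat1211 (w : List ℕ) : PatAvoids w [1,2,1,1] ↔
    ∀ a b, a < b → ¬ [a,b,a,a].Sublist w := by
  constructor
  · intro h a b hab hs
    refine h ⟨_, hs, rfl, ?_⟩
    intro i j hi hj
    simp at hi hj
    interval_cases i <;> interval_cases j <;> simp <;> omega
  · rintro h ⟨s, hs, hl, ho⟩
    rcases s with _ | ⟨a, _ | ⟨b, _ | ⟨c, _ | ⟨d, _ | ⟨e, s⟩⟩⟩⟩⟩ <;> simp at hl
    have h1 := ho 0 1 (by simp) (by simp)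
    have h2 := ho 0 2 (by simp) (by simp)
    have h3 := ho 2 0 (by simp) (by simp)
    have h4 := ho 0 3 (by simp) (by simp)
    have h5 := ho 3 0 (by simp) (by simp)
    simp at h1 h2 h3 h4 h5
    have : c = a := by omega
    subst this
    have : d = c := by omega
    subst this
    exact h d b h1 hs

theorem pat1222 (w : List ℕ) : PatAvoids w [1,2,2,2] ↔
    ∀ a b, a < b → ¬ [a,b,b,b].Sublist w := by
  constructor
  · intro h a b hab hs
    refine h ⟨_, hs, rfl, ?_⟩
    intro i j hi hj
    simp at hi hj
    interval_cases i <;> interval_cases j <;> simp <;> omega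
  · rintro h ⟨s, hs, hl, ho⟩
    rcases s with _ | ⟨a, _ | ⟨b, _ | ⟨c, _ | ⟨d, _ | ⟨e, s⟩⟩⟩⟩⟩ <;> simp at hl
    have h1 := ho 0 1 (by simp) (by simp)
    have h2 := ho 1 2 (by simp) (by simp)
    have h3 := ho 2 1 (by simp) (by simp)
    have h4 := ho 1 3 (by simp) (by simp)
    have h5 := ho 3 1 (by simp) (by simp)
    simp at h1 h2 h3 h4 h5
    have : c = b := by omega
    subst this
    have : d = c := by omega
    subst this
    exact h a d h1 hs

def mx (w : List ℕ) : ℕ := w.foldr max 0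

theorem le_mx (w : List ℕ) : ∀ a ∈ w, a ≤ mx w := by
  induction w with
  | nil => simp
  | cons y w ih =>
    intro a ha
    have e : mx (y :: w) = max y (mx w) := rfl
    simp at ha
    rcases ha with rfl | ha
    · omega
    · have := ih a ha; omega

theorem mx_mem (w : List ℕ) (h : 0 < mx w) : mx w ∈ w := by
  induction w with
  | nil => simp [mx] at h
  | cons y w ih =>
    have e : mx (y :: w) = max y (mx w) := rfl
    rcases Nat.lt_or_ge y (mx w) with h1 | h1
    · rw [e, Nat.max_eq_right h1.le]
      simp [ih (by omega)]
    · rw [e, Nat.max_eq_left h1]; simp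

theorem RG_le (m : ℕ) (l : List ℕ) (h : RG m l) : ∀ x ∈ l, x ≤ m + l.length := by
  induction l generalizing m with
  | nil => simp
  | cons a l ih =>
    obtain ⟨h1, h2, h3⟩ := h
    intro x hx
    simp at hx
    simp only [List.length_cons]
    rcases hx with rfl | hx
    · omega
    · have := ih _ h3 x hx
      omega

theorem RG_asc (m : ℕ) (l : List ℕ) (h : RG m l) (K : ℕ) (hK : m + 1 < K) (hl : K ∈ l) :
    [K-1, K].Sublist l := by
  induction l generalizing m with
  | nil => simp at hl
  | cons a l ih =>
    obtain ⟨h1, h2, h3⟩ := h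
    have hl' : K ∈ l := by
      simp at hl
      rcases hl with h | h
      · omega
      · exact h
    by_cases ha : a = K - 1
    · subst ha
      exact (List.singleton_sublist.2 hl').cons_cons _
    · exact (ih _ h3 (by omega) hl').cons _

theorem RG_pfx (j : ℕ) : ∀ (m : ℕ) (l : List ℕ) (_ : RG m l) (K : ℕ) (_ : K = m + 1 + j) (_ : K ∈ l)
    (_ : ∀ a b c, a < b → b < c → ¬ [a,a,b,c].Sublist (List.range' 1 m ++ l)),
    ∃ u, l = List.range' (m+1) j ++ u ∧ K ∈ u := by
  induction j with
  | zero => intro m l _ K _ hl _; exact ⟨l, by simp, hl⟩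
  | succ j ih =>
    intro m l h K hK hl hav
    rcases l with _ | ⟨a, l⟩
    · simp at hl
    obtain ⟨h1, h2, h3⟩ := h
    have hl' : K ∈ l := by
      simp at hl
      rcases hl with h | h
      · omega
      · exact h
    by_cases ha : a = m + 1
    · subst ha
      rw [Nat.max_eq_right (by omega)] at h3
      obtain ⟨u, hu, hKu⟩ := ih (m+1) l h3 K (by omega) hl' (by
        have e : List.range' 1 (m+1) = List.range' 1 m ++ [m+1] := by
          rw [List.range'_concat]; simp [Nat.add_comm]
        rw [e]
        simpa using hav)
      refine ⟨u, ?_, hKu⟩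
      rw [List.range'_succ, hu]; rfl
    · exfalso
      have hs := RG_asc _ l h3 K (by omega) hl'
      refine hav a (K-1) K (by omega) (by omega) ?_
      have e : [a,a,K-1,K] = [a] ++ a :: [K-1,K] := rfl
      rw [e]
      exact (List.singleton_sublist.2 (by simp; omega)).append (hs.cons_cons _)

theorem RG_mid (k : ℕ) (u : List ℕ) (h : ∀ a ∈ u, 1 ≤ a ∧ a ≤ k + 2) (m : ℕ) (hm : k + 1 ≤ m) : RG m u := by
  induction u generalizing m with
  | nil => trivial
  | cons a u ih =>
    have := h a (by simp)
    exact ⟨by omega, by omega, ih (fun a ha => h a (by simp [ha])) _ (by omega)⟩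

theorem RG_app (j m : ℕ) (u : List ℕ) (h : RG (m+j) u) : RG m (List.range' (m+1) j ++ u) := by
  induction j generalizing m with
  | zero => simpa using h
  | succ j ih =>
    rw [List.range'_succ, List.cons_append]
    refine ⟨by omega, by omega, ?_⟩
    rw [Nat.max_eq_right (by omega)]
    apply ih
    have : m + 1 + j = m + (j+1) := by ring
    rwa [this]

theorem Av_iff (k : ℕ) (u : List ℕ) (h : ∀ a ∈ u, 1 ≤ a ∧ a ≤ k + 2) :
    (∀ a b c, a < b → b < c → ¬ [a,a,b,c].Sublist (List.range' 1 (k+1) ++ u)) ↔ Av u := by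
  constructor
  · intro hav a b c hab hbc hs
    refine hav a b c hab hbc ?_
    have e : [a,a,b,c] = [a] ++ [a,b,c] := rfl
    have h1 := h a (hs.subset (by simp))
    have h2 := h c (hs.subset (by simp))
    rw [e]
    exact (List.singleton_sublist.2 (by simp; omega)).append hs
  · intro hav a b c hab hbc hs
    obtain ⟨s1, s2, e, k1, k2⟩ := List.sublist_append_iff.1 hs
    have hnd : s1.Nodup := k1.nodup (List.nodup_range')
    rcases s1 with _ | ⟨a1, _ | ⟨a2, s1⟩⟩
    · simp at e
      subst e
      exact hav a b c hab hbc ((List.sublist_cons_self _ _).trans k2)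
    · simp at e
      obtain ⟨rfl, rfl⟩ := e
      exact hav _ _ _ hab hbc k2
    · simp at e
      obtain ⟨rfl, rfl, e⟩ := e
      simp at hnd

theorem one_le_cnt (a : ℕ) (u : List ℕ) : u.count a ≤ 1 ↔ ¬ [a,a].Sublist u := by
  rw [← rep2]; omega

theorem rng2 (a b k : ℕ) (h1 : 1 ≤ a) (hab : a < b) (hb : b ≤ k + 1) :
    [a,b].Sublist (List.range' 1 (k+1)) := by
  have e : List.range' 1 (k+1) = List.range' 1 (b-1) ++ List.range' b (k + 2 - b) := by
    have := List.range'_append_1 (s := 1) (m := b-1) (n := k+2-b)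
    have e1 : 1 + (b - 1) = b := by omega
    have e2 : b - 1 + (k + 2 - b) = k + 1 := by omega
    rw [e1, e2] at this
    exact this.symm
  have e' : [a,b] = [a] ++ [b] := rfl
  rw [e, e']
  exact (List.singleton_sublist.2 (by simp; omega)).append (List.singleton_sublist.2 (by simp; omega))

theorem condA (k : ℕ) (u : List ℕ) (h : ∀ a ∈ u, 1 ≤ a ∧ a ≤ k + 2) :
    (∀ a b, a < b → ¬ [a,b,a,a].Sublist (List.range' 1 (k+1) ++ u)) ↔
    (∀ a, a ≤ k → u.count a ≤ 1) ∧ ¬ [k+2,k+1,k+1].Sublist u := by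
  constructor
  · intro hav
    refine ⟨fun a ha => (one_le_cnt _ _).2 fun hs => ?_, fun hs => ?_⟩
    · have h1 := h a (hs.subset (by simp))
      refine hav a (a+1) (by omega) ?_
      have e : [a,a+1,a,a] = [a,a+1] ++ [a,a] := rfl
      rw [e]
      exact (rng2 a (a+1) k (by omega) (by omega) (by omega)).append hs
    · refine hav (k+1) (k+2) (by omega) ?_
      have e : [k+1,k+2,k+1,k+1] = [k+1] ++ [k+2,k+1,k+1] := rfl
      rw [e]
      exact (List.singleton_sublist.2 (by simp)).append hs
  · rintro ⟨h1, h2⟩ a b hab hs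
    obtain ⟨s1, s2, e, k1, k2⟩ := List.sublist_append_iff.1 hs
    have hnd : s1.Nodup := k1.nodup (List.nodup_range')
    have key : ∀ l, s2 = l ++ [a,a] → k < a := by
      rintro l rfl
      by_contra hc
      exact (one_le_cnt _ _).1 (h1 a (by omega)) ((List.sublist_append_right _ _).trans k2)
    have hbw : b ∈ List.range' 1 (k+1) ++ u := hs.subset (by simp)
    have hb : b ≤ k + 2 := by
      simp at hbw
      rcases hbw with hb | hb
      · omega
      · exact (h b hb).2
    have fin : [b,a,a].Sublist u → k < a → False := by
      intro h3 h4
      have e1 : a = k + 1 := by omega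
      have e2 : b = k + 2 := by omega
      subst e1 e2
      exact h2 h3
    rcases s1 with _ | ⟨a1, _ | ⟨a2, _ | ⟨a3, s1⟩⟩⟩
    · simp at e
      exact fin ((List.sublist_cons_self _ _).trans (e ▸ k2)) (key [a,b] (by simp [e]))
    · simp at e
      exact fin (e.2 ▸ k2) (key [b] (by simp [e.2]))
    · simp at e
      have h3 := key [] (by simp [e.2.2])
      have h4 := k1.subset (show a2 ∈ [a1,a2] by simp)
      simp at h4
      omega
    · simp at e
      obtain ⟨rfl, rfl, rfl, e⟩ := e
      simp at hnd

theorem condB (k : ℕ) (u : List ℕ) (h : ∀ a ∈ u, 1 ≤ a ∧ a ≤ k + 2) :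
    (∀ a b, a < b → ¬ [a,b,b,b].Sublist (List.range' 1 (k+1) ++ u)) ↔
    (∀ a, 2 ≤ a → a ≤ k+1 → u.count a ≤ 1) ∧ u.count (k+2) ≤ 2 := by
  have c3 : u.count (k+2) ≤ 2 ↔ ¬ [k+2,k+2,k+2].Sublist u := by
    have : [k+2,k+2,k+2] = List.replicate 3 (k+2) := rfl
    rw [this, List.replicate_sublist_iff]; omega
  rw [c3]
  constructor
  · intro hav
    refine ⟨fun a ha ha' => (one_le_cnt _ _).2 fun hs => ?_, fun hs => ?_⟩
    · refine hav 1 a (by omega) ?_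
      have e : [1,a,a,a] = [1,a] ++ [a,a] := rfl
      rw [e]
      exact (rng2 1 a k (by omega) (by omega) (by omega)).append hs
    · refine hav 1 (k+2) (by omega) ?_
      have e : [1,k+2,k+2,k+2] = [1] ++ [k+2,k+2,k+2] := rfl
      rw [e]
      exact (List.singleton_sublist.2 (by simp)).append hs
  · rintro ⟨h1, h2⟩ a b hab hs
    obtain ⟨s1, s2, e, k1, k2⟩ := List.sublist_append_iff.1 hs
    have hnd : s1.Nodup := k1.nodup (List.nodup_range')
    have haw : a ∈ List.range' 1 (k+1) ++ u := hs.subset (by simp)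
    have ha : 1 ≤ a := by
      simp at haw
      rcases haw with hb | hb
      · omega
      · exact (h a hb).1
    have key : ∀ l, s2 = l ++ [b,b] → b = k + 2 := by
      rintro l rfl
      have h3 := h b (k2.subset (by simp))
      by_contra hc
      exact (one_le_cnt _ _).1 (h1 b (by omega) (by omega)) ((List.sublist_append_right _ _).trans k2)
    rcases s1 with _ | ⟨a1, _ | ⟨a2, _ | ⟨a3, s1⟩⟩⟩
    · simp at e
      have h3 := key [a,b] (by simp [e])
      subst h3
      exact h2 ((List.sublist_cons_self _ _).trans (e ▸ k2))
    · simp at e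
      have h3 := key [b] (by simp [e.2])
      subst h3
      exact h2 (e.2 ▸ k2)
    · simp at e
      have h3 := key [] (by simp [e.2.2])
      have h4 := k1.subset (show a2 ∈ [a1,a2] by simp)
      simp at h4
      omega
    · simp at e
      obtain ⟨rfl, rfl, rfl, e⟩ := e
      simp at hnd

theorem struct (n k : ℕ) (w : List ℕ) :
    (IsRGF w ∧ w.length = n ∧ PatAvoids w [1,1,2,3] ∧ mx w = k + 2) ↔
    ∃ u, w = List.range' 1 (k+1) ++ u ∧ Av u ∧ u.length + (k + 1) = n ∧
      (∀ a ∈ u, 1 ≤ a ∧ a ≤ k+2) ∧ k+2 ∈ u := by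
  rw [IsRGF_iff, pat1123]
  constructor
  · rintro ⟨h1, h2, h3, h4⟩
    have hK : k + 2 ∈ w := h4 ▸ mx_mem w (by omega)
    obtain ⟨u, hu, hKu⟩ := RG_pfx (k+1) 0 w h1 (k+2) (by omega) hK (by simpa using h3)
    simp only [Nat.zero_add] at hu
    have h5 := (RG_iff 0 w).1 h1
    have hl : ∀ a ∈ u, 1 ≤ a ∧ a ≤ k+2 := fun a ha =>
      ⟨h5.1 a (by simp [hu, ha]), h4 ▸ le_mx w a (by simp [hu, ha])⟩
    refine ⟨u, hu, ?_, ?_, hl, hKu⟩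
    · rw [hu] at h3
      exact (Av_iff k u hl).1 h3
    · rw [hu] at h2; simp at h2; omega
  · rintro ⟨u, rfl, h1, h2, h3, h4⟩
    refine ⟨?_, ?_, (Av_iff k u h3).2 h1, ?_⟩
    · have := RG_app (k+1) 0 u (RG_mid k u h3 _ (by omega))
      simpa using this
    · simp; omega
    · have g1 := le_mx (List.range' 1 (k+1) ++ u) (k+2) (by simp [h4])
      have g2 := mx_mem (List.range' 1 (k+1) ++ u) (by omega)
      have g3 : ∀ x ∈ List.range' 1 (k+1) ++ u, x ≤ k + 2 := by
        intro x hx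
        rw [List.mem_append] at hx
        rcases hx with hx | hx
        · simp at hx; omega
        · exact (h3 x hx).2
      have := g3 _ g2
      omega

theorem small (w : List ℕ) (h : IsRGF w) (hm : mx w ≤ 1) :
    PatAvoids w [1,2,1,1] ∧ PatAvoids w [1,2,2,2] := by
  rw [pat1211, pat1222]
  have h0 : ∀ a ∈ w, a = 1 := fun a ha => by
    have := le_mx w a ha
    have := h.1 a ha
    omega
  constructor
  · intro a b hab hs
    have := h0 a (hs.subset (by simp))
    have := h0 b (hs.subset (by simp))
    omega
  · intro a b hab hs
    have := h0 a (hs.subset (by simp))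
    have := h0 b (hs.subset (by simp))
    omega

theorem big (n : ℕ) (p : List ℕ) (k : ℕ) (S : ℕ → ℕ → Set (List ℕ)) (hk : k + 2 ≤ n)
    (hS : ∀ m u, u ∈ S k m ↔ ((Av u ∧ u.length = m ∧ (∀ a ∈ u, 1 ≤ a ∧ a ≤ k+2) ∧ k+2 ∈ u) ∧
      PatAvoids (List.range' 1 (k+1) ++ u) p)) :
    {w ∈ {w | IsRGF w ∧ w.length = n ∧ ∀ q ∈ ({[1,1,2,3], p} : Set (List ℕ)), PatAvoids w q} | mx w = k+2}.ncard
      = (S k (n - (k+1))).ncard := by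
  have hinj : Function.Injective (fun v : List ℕ => List.range' 1 (k+1) ++ v) := by
    intro v w h
    simpa using h
  rw [← Set.ncard_image_of_injective (S k (n - (k+1))) hinj]
  congr 1
  ext w
  constructor
  · rintro ⟨⟨h1, h2, h3⟩, h4⟩
    obtain ⟨u, rfl, g1, g2, g3, g4⟩ := (struct n k w).1 ⟨h1, h2, h3 _ (by simp), h4⟩
    exact ⟨u, (hS _ _).2 ⟨⟨g1, by omega, g3, g4⟩, h3 _ (by simp)⟩, rfl⟩
  · rintro ⟨u, hu, rfl⟩
    obtain ⟨⟨g1, g2, g3, g4⟩, g5⟩ := (hS _ _).1 hu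
    obtain ⟨h1, h2, h3, h4⟩ := (struct n k (List.range' 1 (k+1) ++ u)).2 ⟨u, rfl, g1, by omega, g3, g4⟩
    refine ⟨⟨h1, h2, ?_⟩, h4⟩
    intro q hq
    simp at hq
    rcases hq with rfl | rfl
    · exact h3
    · exact g5

theorem mx_le (w : List ℕ) (h : IsRGF w) : mx w ≤ w.length := by
  rcases Nat.eq_zero_or_pos (mx w) with h0 | h0
  · omega
  · have := RG_le 0 w ((IsRGF_iff w).1 h) _ (mx_mem w h0)
    omega

theorem pc (n : ℕ) (T : Set (List ℕ)) : pCount n T = ∑ K ∈ Finset.range (n+1),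
    {w ∈ {w | IsRGF w ∧ w.length = n ∧ ∀ q ∈ T, PatAvoids w q} | mx w = K}.ncard := by
  unfold pCount
  refine fib _ n n ?_ mx (n+1) ?_
  · rintro w ⟨h1, h2, -⟩
    refine ⟨h2, fun a ha => ?_⟩
    have := le_mx w a ha
    have := mx_le w h1
    omega
  · rintro w ⟨h1, h2, -⟩
    have := mx_le w h1
    omega

/-- The pattern pairs (1123,1211) and (1123,1222) are Wilf-equivalent. -/
theorem stmt19 :
    ∀ n : ℕ, pCount n {[1,1,2,3], [1,2,1,1]} = pCount n {[1,1,2,3], [1,2,2,2]} := by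
  intro n
  rw [pc, pc]
  refine Finset.sum_congr rfl fun K hK => ?_
  rw [Finset.mem_range] at hK
  by_cases hK2 : K ≤ 1
  · congr 1
    ext w
    constructor
    · rintro ⟨⟨h1, h2, h3⟩, h4⟩
      have := small w h1 (by omega)
      refine ⟨⟨h1, h2, fun q hq => ?_⟩, h4⟩
      simp at hq
      rcases hq with rfl | rfl
      · exact h3 _ (by simp)
      · exact this.2
    · rintro ⟨⟨h1, h2, h3⟩, h4⟩
      have := small w h1 (by omega)
      refine ⟨⟨h1, h2, fun q hq => ?_⟩, h4⟩
      simp at hq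
      rcases hq with rfl | rfl
      · exact h3 _ (by simp)
      · exact this.1
  · obtain ⟨k, rfl⟩ : ∃ k, K = k + 2 := ⟨K - 2, by omega⟩
    rw [big n [1,2,1,1] k SA (by omega), big n [1,2,2,2] k SB (by omega), SA_eq_SB]
    · intro m u
      rw [pat1222]
      constructor
      · rintro ⟨h1, h2, h3, h4, h5⟩
        exact ⟨⟨h1, h2, h3, h4⟩, (condB k u h3).2 h5⟩
      · rintro ⟨⟨h1, h2, h3, h4⟩, h5⟩
        exact ⟨h1, h2, h3, h4, (condB k u h3).1 h5⟩
    · intro m u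
      rw [pat1211]
      constructor
      · rintro ⟨h1, h2, h3, h4, h5⟩
        exact ⟨⟨h1, h2, h3, h4⟩, (condA k u h3).2 h5⟩
      · rintro ⟨⟨h1, h2, h3, h4⟩, h5⟩
        exact ⟨h1, h2, h3, h4, (condA k u h3).1 h5⟩
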